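/- arXiv:2002.00598 — 2 statements merged into one kernel-verified Lean document; each statement's English description precedes it below -/
import Mathlib

section
/- The function γ ↦ F(γ, 0) is monotone increasing on the interval [−1, ∞). -/
open Real intervalIntegral

/-- `σ⁺(γ,x) = 2 − γ²x + √((2−γ²x)² + 4(γ+1)²)`. -/
noncomputable def sigmaPlus (γ x : ℝ) : ℝ :=
  2 - γ ^ 2 * x + Real.sqrt ((2 - γ ^ 2 * x) ^ 2 + 4 * (γ + 1) ^ 2)

/-- `σ⁻(γ,x) = 2 − γ²x − √((2−γ²x)² + 4(γ+1)²)`. -/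
noncomputable def sigmaMinus (γ x : ℝ) : ℝ :=
  2 - γ ^ 2 * x - Real.sqrt ((2 - γ ^ 2 * x) ^ 2 + 4 * (γ + 1) ^ 2)

/-- `F(γ,x) = σ⁺(γ,x) · (∫₀¹ r^{3/2}/√((1−r)(σ⁺ r − σ⁻)) dr) /
    (∫₀¹ r^{1/2}/√((1−r)(σ⁺ r − σ⁻)) dr)`. -/
noncomputable def F (γ x : ℝ) : ℝ :=
  sigmaPlus γ x *
    (∫ r in (0:ℝ)..1, r ^ ((3:ℝ)/2) /
      Real.sqrt ((1 - r) * (sigmaPlus γ x * r - sigmaMinus γ x))) /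
    (∫ r in (0:ℝ)..1, r ^ ((1:ℝ)/2) /
      Real.sqrt ((1 - r) * (sigmaPlus γ x * r - sigmaMinus γ x)))

/-- The lemniscatic constant `ϖ = 2∫₀¹ dt/√(1−t⁴)`. -/
noncomputable def varpi : ℝ := 2 * ∫ t in (0:ℝ)..1, 1 / Real.sqrt (1 - t ^ 4)


lemma aux_int (a b : ℝ) (ha : 0 < a) (hb : b ≤ 0) (p : ℝ) (hp : 1/2 ≤ p) :
    IntervalIntegrable (fun r : ℝ => r ^ p / Real.sqrt ((1 - r) * (a * r - b)))
      MeasureTheory.volume 0 1 := by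
  have h0 : IntervalIntegrable (fun r : ℝ => (1 - r) ^ (-(1/2) : ℝ)) MeasureTheory.volume 0 1 := by
    have := (intervalIntegrable_rpow' (a := 0) (b := 1) (r := (-(1/2) : ℝ)) (by norm_num)).comp_sub_left 1
    simpa using this.symm
  have h1 := h0.const_mul (1 / Real.sqrt a)
  refine h1.mono_fun' ?_ ?_
  · apply Measurable.aestronglyMeasurable
    fun_prop
  · rw [Set.uIoc_of_le zero_le_one]
    refine (MeasureTheory.ae_restrict_iff' measurableSet_Ioc).2 (Filter.Eventually.of_forall ?_)
    rintro r ⟨hr0, hr1⟩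
    dsimp only
    rcases hr1.eq_or_lt with rfl | hr1
    · simp
    have e1 : (0:ℝ) < 1 - r := by linarith
    have e2 : 0 < a * r := by positivity
    have e3 : r ^ p ≤ Real.sqrt r := by
      rw [Real.sqrt_eq_rpow]
      exact Real.rpow_le_rpow_of_exponent_ge hr0 hr1.le hp
    rw [Real.norm_of_nonneg (by positivity)]
    have e4 : Real.sqrt ((1 - r) * (a * r)) ≤ Real.sqrt ((1 - r) * (a * r - b)) := by
      apply Real.sqrt_le_sqrt
      gcongr
      linarith
    have e5 : 0 < Real.sqrt ((1 - r) * (a * r)) := Real.sqrt_pos.2 (by positivity)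
    calc r ^ p / Real.sqrt ((1 - r) * (a * r - b))
        ≤ Real.sqrt r / Real.sqrt ((1 - r) * (a * r)) := by gcongr
      _ = 1 / Real.sqrt a * (1 - r) ^ (-(1/2) : ℝ) := by
        rw [Real.sqrt_mul e1.le, Real.sqrt_mul ha.le, Real.rpow_neg e1.le, ← Real.sqrt_eq_rpow]
        have := Real.sqrt_pos.2 hr0
        have := Real.sqrt_pos.2 ha
        have := Real.sqrt_pos.2 e1
        field_simp

lemma aux_pos (a b : ℝ) (ha : 0 < a) (hb : b ≤ 0) (p : ℝ) (hp : 1/2 ≤ p) :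
    0 < ∫ r in (0:ℝ)..1, r ^ p / Real.sqrt ((1 - r) * (a * r - b)) := by
  refine intervalIntegral_pos_of_pos_on (aux_int a b ha hb p hp) ?_ zero_lt_one
  rintro r ⟨hr0, hr1⟩
  have : 0 < a * r := by positivity
  exact div_pos (Real.rpow_pos_of_pos hr0 _)
    (Real.sqrt_pos.2 (mul_pos (by linarith) (by linarith)))

lemma aux_key (a b c d m r : ℝ) (ha : 0 < a) (hb : b ≤ 0) (hc : 0 < c) (hd : d ≤ 0)
    (h : a * d ≤ c * b) (hm : 0 < m) (hr0 : 0 < r) (hr1 : r < 1) :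
    (Real.sqrt (a * m - b) / Real.sqrt (c * m - d)) *
      (r ^ ((3:ℝ)/2) / Real.sqrt ((1 - r) * (a * r - b))
        - m * (r ^ ((1:ℝ)/2) / Real.sqrt ((1 - r) * (a * r - b))))
    ≤ r ^ ((3:ℝ)/2) / Real.sqrt ((1 - r) * (c * r - d))
        - m * (r ^ ((1:ℝ)/2) / Real.sqrt ((1 - r) * (c * r - d))) := by
  have e1 : (0:ℝ) < 1 - r := by linarith
  have i1 : 0 < a * r - b := by have : 0 < a * r := by positivity
                                linarith
  have i2 : 0 < c * r - d := by have : 0 < c * r := by positivity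
                                linarith
  have i3 : 0 < a * m - b := by have : 0 < a * m := by positivity
                                linarith
  have i4 : 0 < c * m - d := by have : 0 < c * m := by positivity
                                linarith
  have e3 : r ^ ((3:ℝ)/2) = r * r ^ ((1:ℝ)/2) := by
    rw [show (3:ℝ)/2 = 1 + 1/2 by norm_num, Real.rpow_add hr0, Real.rpow_one]
  have hq : 0 < r ^ ((1:ℝ)/2) := Real.rpow_pos_of_pos hr0 _
  rw [e3, Real.sqrt_mul e1.le, Real.sqrt_mul e1.le]
  have hu := Real.sqrt_pos.2 e1
  have j1 := Real.sqrt_pos.2 i1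
  have j2 := Real.sqrt_pos.2 i2
  have j3 := Real.sqrt_pos.2 i3
  have j4 := Real.sqrt_pos.2 i4
  have key : 0 ≤ (r - m) * (Real.sqrt (a * r - b) * Real.sqrt (c * m - d)
      - Real.sqrt (a * m - b) * Real.sqrt (c * r - d)) := by
    rw [← Real.sqrt_mul i1.le, ← Real.sqrt_mul i3.le]
    rcases le_total m r with hmr | hmr
    · refine mul_nonneg (by linarith) (sub_nonneg.2 (Real.sqrt_le_sqrt ?_))
      nlinarith [mul_nonneg (sub_nonneg.2 h) (sub_nonneg.2 hmr)]
    · refine mul_nonneg_of_nonpos_of_nonpos (by linarith) (sub_nonpos.2 (Real.sqrt_le_sqrt ?_))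
      nlinarith [mul_nonneg (sub_nonneg.2 h) (sub_nonneg.2 hmr)]
  rw [← sub_nonneg]
  generalize r ^ ((1:ℝ)/2) = q at *
  generalize Real.sqrt (1 - r) = u at *
  generalize Real.sqrt (a * r - b) = A at *
  generalize Real.sqrt (c * r - d) = C at *
  generalize Real.sqrt (a * m - b) = A' at *
  generalize Real.sqrt (c * m - d) = C' at *
  have : r * q / (u * C) - m * (q / (u * C)) -
      A' / C' * (r * q / (u * A) - m * (q / (u * A)))
      = q / (u * C * C' * A) * ((r - m) * (A * C' - A' * C)) := by
    field_simp
  rw [this]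
  positivity

lemma aux_mono (a b c d : ℝ) (ha : 0 < a) (hb : b ≤ 0) (hc : 0 < c) (hd : d ≤ 0)
    (h : a * d ≤ c * b) :
    (∫ r in (0:ℝ)..1, r ^ ((3:ℝ)/2) / Real.sqrt ((1 - r) * (a * r - b))) /
    (∫ r in (0:ℝ)..1, r ^ ((1:ℝ)/2) / Real.sqrt ((1 - r) * (a * r - b))) ≤
    (∫ r in (0:ℝ)..1, r ^ ((3:ℝ)/2) / Real.sqrt ((1 - r) * (c * r - d))) /
    (∫ r in (0:ℝ)..1, r ^ ((1:ℝ)/2) / Real.sqrt ((1 - r) * (c * r - d))) := by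
  have n1 := aux_pos a b ha hb (3/2) (by norm_num)
  have d1 := aux_pos a b ha hb (1/2) (by norm_num)
  have d2 := aux_pos c d hc hd (1/2) (by norm_num)
  have In1 := aux_int a b ha hb (3/2) (by norm_num)
  have Id1 := aux_int a b ha hb (1/2) (by norm_num)
  have In2 := aux_int c d hc hd (3/2) (by norm_num)
  have Id2 := aux_int c d hc hd (1/2) (by norm_num)
  rw [le_div_iff₀ d2]
  obtain ⟨m, hmd⟩ : ∃ m, m = (∫ r in (0:ℝ)..1, r ^ ((3:ℝ)/2) / Real.sqrt ((1 - r) * (a * r - b))) /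
    (∫ r in (0:ℝ)..1, r ^ ((1:ℝ)/2) / Real.sqrt ((1 - r) * (a * r - b))) := ⟨_, rfl⟩
  have hm : 0 < m := hmd ▸ div_pos n1 d1
  rw [← hmd]
  rw [eq_div_iff d1.ne'] at hmd
  have := integral_mono_on_of_le_Ioo zero_le_one
    ((In1.sub (Id1.const_mul m)).const_mul (Real.sqrt (a * m - b) / Real.sqrt (c * m - d)))
    (In2.sub (Id2.const_mul m))
    (fun r hr => aux_key a b c d m r ha hb hc hd h hm hr.1 hr.2)
  rw [integral_const_mul, integral_sub In1 (Id1.const_mul m), integral_sub In2 (Id2.const_mul m),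
    integral_const_mul, integral_const_mul, hmd] at this
  linarith

/-- The function `γ ↦ F(γ,0)` is monotone increasing on `[−1,∞)`. -/
theorem statement_5 : MonotoneOn (fun γ => F γ 0) (Set.Ici (-1 : ℝ)) := by
  intro x hx y hy hxy
  simp only [Set.mem_Ici] at hx hy
  have hs : Real.sqrt ((2 - x ^ 2 * 0) ^ 2 + 4 * (x + 1) ^ 2)
      ≤ Real.sqrt ((2 - y ^ 2 * 0) ^ 2 + 4 * (y + 1) ^ 2) := by
    apply Real.sqrt_le_sqrt
    nlinarith
  have h2 : 2 ≤ Real.sqrt ((2 - x ^ 2 * 0) ^ 2 + 4 * (x + 1) ^ 2) := by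
    apply Real.le_sqrt_of_sq_le
    nlinarith [sq_nonneg (x + 1)]
  have a1 : 0 < sigmaPlus x 0 := by unfold sigmaPlus; linarith
  have a2 : sigmaPlus x 0 ≤ sigmaPlus y 0 := by unfold sigmaPlus; linarith
  have b1 : sigmaMinus x 0 ≤ 0 := by unfold sigmaMinus; linarith
  have b2 : sigmaMinus y 0 ≤ 0 := by unfold sigmaMinus; linarith
  have h : sigmaPlus x 0 * sigmaMinus y 0 ≤ sigmaPlus y 0 * sigmaMinus x 0 := by
    unfold sigmaPlus sigmaMinus; nlinarith
  have key := aux_mono _ _ _ _ a1 b1 (a1.trans_le a2) b2 h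
  have n1 := aux_pos _ _ a1 b1 (3/2) (by norm_num)
  have d1 := aux_pos _ _ a1 b1 (1/2) (by norm_num)
  simp only [F, mul_div_assoc]
  exact mul_le_mul a2 key (div_pos n1 d1).le (a1.le.trans a2)
end

section
/- Let μ > 1, set γ = (1+√μ)/(μ−1), and let x > 0 be the unique solution of F(γ, x) = 2. If γ < (3π − ϖ²)/ϖ² then σ⁺(γ,x)/2 > γ + 1 (the orbits of the two electrons intersect), and if γ > (3π − ϖ²)/ϖ² then σ⁺(γ,x)/2 < γ + 1 (the orbits do not intersect). Here ϖ = 2∫₀¹ dt/√(1−t⁴) is the lemniscatic constant. -/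
open Real intervalIntegral

open MeasureTheory Set

lemma aux_beta (a b : ℝ) (ha : 0 < a) (hb : 0 < b) :
    ∫ u in (0:ℝ)..1, u ^ (a - 1) * (1 - u) ^ (b - 1) = ProbabilityTheory.beta a b := by
  rw [ProbabilityTheory.beta_eq_betaIntegralReal a b ha hb, Complex.betaIntegral]
  have : ∫ x in (0:ℝ)..1, (x:ℂ) ^ ((a:ℂ) - 1) * (1 - (x:ℂ)) ^ ((b:ℂ) - 1)
      = ((∫ u in (0:ℝ)..1, u ^ (a - 1) * (1 - u) ^ (b - 1) : ℝ) : ℂ) := by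
    rw [← intervalIntegral.integral_ofReal]
    apply intervalIntegral.integral_congr
    intro x hx
    rw [uIcc_of_le zero_le_one] at hx
    simp only
    push_cast
    rw [Complex.ofReal_cpow hx.1, Complex.ofReal_cpow (sub_nonneg.2 hx.2)]
    push_cast
    rfl
  rw [this, Complex.ofReal_re]

lemma aux_sub (p q : ℝ) (hp : 0 < p) (hq : -1 < q) :
    ∫ t in (0:ℝ)..1, t ^ q / Real.sqrt (1 - t ^ p)
      = ProbabilityTheory.beta ((q + 1) / p) (1 / 2) / p := by
  rw [← aux_beta _ _ (div_pos (by linarith) hp) (by norm_num)]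
  rw [eq_div_iff hp.ne', mul_comm, ← intervalIntegral.integral_const_mul]
  rw [intervalIntegral.integral_of_le zero_le_one, intervalIntegral.integral_of_le zero_le_one,
    integral_Ioc_eq_integral_Ioo, integral_Ioc_eq_integral_Ioo]
  set h : ℝ → ℝ := fun u => u ^ ((q + 1) / p - 1) * (1 - u) ^ ((1:ℝ) / 2 - 1) with hh
  have key := integral_comp_rpow_Ioi_of_pos (g := (Iio (1:ℝ)).indicator h) hp
  rw [setIntegral_indicator measurableSet_Iio, Ioi_inter_Iio] at key
  rw [← key]
  rw [← Ioi_inter_Iio, ← setIntegral_indicator measurableSet_Iio]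
  apply setIntegral_congr_fun measurableSet_Ioi
  intro x hx
  have hx0 : 0 < x := hx
  by_cases h1 : x < 1
  · have h2 : x ^ p < 1 := Real.rpow_lt_one hx0.le h1 hp
    simp only [indicator, mem_Iio, h1, h2, if_true, smul_eq_mul, hh]
    rw [← Real.rpow_mul hx0.le]
    have e1 : (1 - x ^ p) ^ ((1:ℝ) / 2 - 1) = (Real.sqrt (1 - x ^ p))⁻¹ := by
      rw [Real.sqrt_eq_rpow, ← Real.rpow_neg (by linarith)]
      norm_num
    have e2 : x ^ q = x ^ (p - 1) * x ^ (p * ((q + 1) / p - 1)) := by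
      rw [← Real.rpow_add hx0]
      congr 1
      field_simp
      ring
    rw [e1, e2]
    ring
  · have h2 : ¬ x ^ p < 1 := by
      push Not at h1 ⊢
      exact Real.one_le_rpow h1 hp.le
    simp [indicator, h1, h2]

noncomputable def auxJ (e s m : ℝ) : ℝ :=
  ∫ r in (0:ℝ)..1, r ^ e / Real.sqrt ((1 - r) * (s * r + m))

lemma aux_base (e : ℝ) (he : -1 < e) :
    auxJ e 1 1 = ProbabilityTheory.beta ((e + 1) / 2) (1 / 2) / 2 := by
  rw [← aux_sub 2 e (by norm_num) he, auxJ]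
  congr 1
  ext r
  rw [show ((2:ℝ)) = ((2:ℕ):ℝ) by norm_num, Real.rpow_natCast]
  congr 2
  ring

lemma aux_int_s10 (e s m : ℝ) (he : 0 < e) (hs : 0 < s) (hm : 0 < m) :
    IntervalIntegrable (fun r => r ^ e / Real.sqrt ((1 - r) * (s * r + m))) volume 0 1 := by
  have h0 : IntervalIntegrable (fun r : ℝ => (1 - r) ^ (-(1/2) : ℝ)) volume 0 1 := by
    have := (intervalIntegral.intervalIntegrable_rpow' (a := 1) (b := 0) (r := -(1/2)) (by norm_num)).comp_sub_left 1
    simpa using this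
  have h1 : ContinuousOn (fun r : ℝ => r ^ e / Real.sqrt (s * r + m)) (uIcc 0 1) := by
    rw [uIcc_of_le zero_le_one]
    apply ContinuousOn.div
    · exact (Real.continuous_rpow_const he.le).continuousOn
    · fun_prop
    · intro r hr
      have : 0 < s * r + m := by nlinarith [hr.1]
      positivity
  refine (h0.mul_continuousOn h1).congr ?_
  intro r hr
  rw [uIoc_of_le zero_le_one] at hr
  have : 0 ≤ 1 - r := by linarith [hr.2]
  simp only
  rw [Real.rpow_neg this, ← Real.sqrt_eq_rpow, Real.sqrt_mul this]
  ring

lemma aux_pos_s10 (e s m : ℝ) (he : 0 < e) (hs : 0 < s) (hm : 0 < m) : 0 < auxJ e s m := by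
  apply intervalIntegral.intervalIntegral_pos_of_pos_on (aux_int_s10 e s m he hs hm) _ zero_lt_one
  intro r hr
  have h1 : 0 < 1 - r := by linarith [hr.2]
  have h0 : 0 < r := hr.1
  positivity

lemma aux_le (c e s m s' m' : ℝ) (he : 0 < e) (hs : 0 < s) (hm : 0 < m) (hs' : 0 < s')
    (hm' : 0 < m') (hc : 0 < c)
    (h : ∀ r : ℝ, 0 < r → r < 1 → c * (s' * r + m') ≤ s * r + m) :
    Real.sqrt c * auxJ e s m ≤ auxJ e s' m' := by
  unfold auxJ
  rw [← intervalIntegral.integral_const_mul]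
  apply intervalIntegral.integral_mono_on_of_le_Ioo zero_le_one
    ((aux_int_s10 e s m he hs hm).const_mul _) (aux_int_s10 e s' m' he hs' hm')
  intro r hr
  have h1 : 0 < 1 - r := by linarith [hr.2]
  have h0 : 0 < r := hr.1
  have h2 := h r hr.1 hr.2
  rw [← mul_div_assoc, div_le_div_iff₀ (by positivity) (by positivity)]
  have : Real.sqrt c * Real.sqrt ((1 - r) * (s' * r + m')) ≤ Real.sqrt ((1 - r) * (s * r + m)) := by
    rw [← Real.sqrt_mul hc.le]
    apply Real.sqrt_le_sqrt
    nlinarith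
  have hr : 0 ≤ r ^ e := by positivity
  nlinarith

lemma aux_varpi : varpi ^ 2 * auxJ (1/2) 1 1 = 3 * π * auxJ (3/2) 1 1 := by
  have hv : varpi = ProbabilityTheory.beta (1/4) (1/2) / 2 := by
    have h := aux_sub 4 0 (by norm_num) (by norm_num)
    have h' : ∫ t in (0:ℝ)..1, t ^ (0:ℝ) / Real.sqrt (1 - t ^ (4:ℝ))
        = ∫ t in (0:ℝ)..1, 1 / Real.sqrt (1 - t ^ 4) := by
      congr 1
      ext r
      rw [show ((4:ℝ)) = ((4:ℕ):ℝ) by norm_num, Real.rpow_natCast, Real.rpow_zero]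
    rw [varpi, ← h', h]
    norm_num
    ring
  rw [hv, aux_base _ (by norm_num), aux_base _ (by norm_num)]
  unfold ProbabilityTheory.beta
  have g1 : Real.Gamma (5/4) = 1/4 * Real.Gamma (1/4) := by
    rw [← Real.Gamma_add_one (by norm_num)]; norm_num
  have g2 : Real.Gamma (7/4) = 3/4 * Real.Gamma (3/4) := by
    rw [← Real.Gamma_add_one (by norm_num)]; norm_num
  have p1 : 0 < Real.Gamma (1/4) := Real.Gamma_pos_of_pos (by norm_num)
  have p2 : 0 < Real.Gamma (3/4) := Real.Gamma_pos_of_pos (by norm_num)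
  have hp : Real.Gamma (1/2) ^ 2 = π := by
    rw [Real.Gamma_one_half_eq, Real.sq_sqrt Real.pi_pos.le]
  norm_num at *
  rw [g1, g2, ← hp]
  field_simp
  norm_num

set_option maxHeartbeats 1000000 in
theorem statement_10 (μ γ x : ℝ) (hμ : 1 < μ) (hγ : γ = (1 + Real.sqrt μ) / (μ - 1))
    (hx : 0 < x) (hFx : F γ x = 2) :
    (γ < (3 * π - varpi ^ 2) / varpi ^ 2 → sigmaPlus γ x / 2 > γ + 1) ∧
    (γ > (3 * π - varpi ^ 2) / varpi ^ 2 → sigmaPlus γ x / 2 < γ + 1) := by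
  have hγ0 : 0 < γ := by
    rw [hγ]
    have : 0 < μ - 1 := by linarith
    positivity
  obtain ⟨a, ha⟩ : ∃ a, a = γ + 1 := ⟨_, rfl⟩
  have ha0 : 0 < a := by linarith
  obtain ⟨s, hs⟩ : ∃ s, s = sigmaPlus γ x := ⟨_, rfl⟩
  obtain ⟨m, hm⟩ : ∃ m, m = - sigmaMinus γ x := ⟨_, rfl⟩
  have hq : |2 - γ ^ 2 * x| < Real.sqrt ((2 - γ ^ 2 * x) ^ 2 + 4 * (γ + 1) ^ 2) := by
    rw [← Real.sqrt_sq_eq_abs]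
    apply Real.sqrt_lt_sqrt (sq_nonneg _)
    rw [← ha]
    nlinarith [sq_pos_of_pos ha0]
  have hs0 : 0 < s := by
    rw [hs, sigmaPlus]; linarith [(abs_lt.1 hq).1]
  have hm0 : 0 < m := by
    rw [hm, sigmaMinus]; linarith [(abs_lt.1 hq).2]
  have hsm : s * m = (2 * a) ^ 2 := by
    rw [hs, hm, sigmaPlus, sigmaMinus, ha]
    have := Real.sq_sqrt (show 0 ≤ (2 - γ ^ 2 * x) ^ 2 + 4 * (γ + 1) ^ 2 by positivity)
    nlinarith
  have hF : s * auxJ (3/2) s m = 2 * auxJ (1/2) s m := by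
    have h1 := aux_pos_s10 (1/2) s m (by norm_num) hs0 hm0
    have : F γ x = s * auxJ (3/2) s m / auxJ (1/2) s m := by
      unfold F auxJ
      rw [← hs, hm]
      simp only [sub_eq_add_neg]
    rw [this, div_eq_iff h1.ne'] at hFx
    exact hFx
  have hA := aux_pos_s10 (3/2) 1 1 (by norm_num) one_pos one_pos
  have hB := aux_pos_s10 (1/2) 1 1 (by norm_num) one_pos one_pos
  have hv := aux_varpi
  have hv0 : 0 < varpi ^ 2 := by
    have : 0 < varpi ^ 2 * auxJ (1/2) 1 1 := by rw [hv]; positivity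
    exact pos_of_mul_pos_left this hB.le
  have hsq : Real.sqrt s * Real.sqrt m = 2 * a := by
    rw [← Real.sqrt_mul hs0.le, hsm, Real.sqrt_sq (by linarith)]
  have hss : Real.sqrt s * Real.sqrt s = s := Real.mul_self_sqrt hs0.le
  have hmm : Real.sqrt m * Real.sqrt m = m := Real.mul_self_sqrt hm0.le
  have ps : 0 < Real.sqrt s := Real.sqrt_pos.2 hs0
  have pm : 0 < Real.sqrt m := Real.sqrt_pos.2 hm0
  have hi : Real.sqrt s⁻¹ = (Real.sqrt s)⁻¹ := Real.sqrt_inv s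
  have hi' : Real.sqrt m⁻¹ = (Real.sqrt m)⁻¹ := Real.sqrt_inv m
  -- common identity: √m * (2 J1) = 2a * (√s J3)
  have hid : Real.sqrt m * auxJ (1/2) s m = a * (Real.sqrt s * auxJ (3/2) s m) := by
    have : 2 * (Real.sqrt m * auxJ (1/2) s m) = Real.sqrt m * (s * auxJ (3/2) s m) := by
      rw [hF]; ring
    rw [← hss] at this
    have e : Real.sqrt m * (Real.sqrt s * Real.sqrt s * auxJ (3/2) s m)
      = (Real.sqrt s * Real.sqrt m) * (Real.sqrt s * auxJ (3/2) s m) := by ring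
    rw [hss] at this
    rw [hss, hsq] at e
    linarith
  rw [← hs, ← ha]
  constructor
  · intro hlt
    rw [lt_div_iff₀ hv0] at hlt
    by_contra hcon
    have h1 : s ≤ m := by nlinarith
    have c1 : Real.sqrt s * auxJ (3/2) s m ≤ auxJ (3/2) 1 1 :=
      aux_le s _ s m 1 1 (by norm_num) hs0 hm0 one_pos one_pos hs0 (by intro r _ _; nlinarith)
    have c2 : Real.sqrt m⁻¹ * auxJ (1/2) 1 1 ≤ auxJ (1/2) s m :=
      aux_le m⁻¹ _ 1 1 s m (by norm_num) one_pos one_pos hs0 hm0 (by positivity) (by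
        intro r hr _
        rw [inv_mul_le_iff₀ hm0]; nlinarith)
    rw [hi', inv_mul_le_iff₀ pm] at c2
    have h3 : auxJ (1/2) 1 1 ≤ a * auxJ (3/2) 1 1 := by
      rw [hid] at c2
      exact c2.trans (mul_le_mul_of_nonneg_left c1 ha0.le)
    have h4 : a * varpi ^ 2 < 3 * π := by rw [ha]; linarith
    linarith [mul_le_mul_of_nonneg_left h3 hv0.le, mul_lt_mul_of_pos_right h4 hA]
  · intro hlt
    rw [gt_iff_lt, div_lt_iff₀ hv0] at hlt
    by_contra hcon
    have h1 : m ≤ s := by nlinarith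
    have c2 : Real.sqrt m * auxJ (1/2) s m ≤ auxJ (1/2) 1 1 :=
      aux_le m _ s m 1 1 (by norm_num) hs0 hm0 one_pos one_pos hm0 (by intro r _ _; nlinarith)
    have c1 : Real.sqrt s⁻¹ * auxJ (3/2) 1 1 ≤ auxJ (3/2) s m :=
      aux_le s⁻¹ _ 1 1 s m (by norm_num) one_pos one_pos hs0 hm0 (by positivity) (by
        intro r hr _
        rw [inv_mul_le_iff₀ hs0]; nlinarith)
    rw [hi, inv_mul_le_iff₀ ps] at c1
    have h3 : a * auxJ (3/2) 1 1 ≤ auxJ (1/2) 1 1 := by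
      rw [hid] at c2
      exact (mul_le_mul_of_nonneg_left c1 ha0.le).trans c2
    have h4 : 3 * π < a * varpi ^ 2 := by rw [ha]; linarith
    linarith [mul_le_mul_of_nonneg_left h3 hv0.le, mul_lt_mul_of_pos_right h4 hA]
end
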